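/- arXiv:1903.06018 — 5 statements merged into one kernel-verified Lean document; each statement's English description precedes it below -/
import Mathlib

section
/- Let E, A_xx be M_x×M_x, A_xv be M_x×M_v, A_zx be M_z×M_x, A_zv be M_z×M_v, C_x be M_y×M_x, C_v be M_y×M_v, and Φ be M_v×M_z complex matrices, with I_{M_v} − Φ A_zv invertible. Define A = A_xx + A_xv (I − Φ A_zv)^{-1} Φ A_zx and C = C_x + C_v (I − Φ A_zv)^{-1} Φ A_zx. Then for every complex λ_0, the stacked matrix col{λ_0 E − A, C} has full column rank if and only if the matrix Ξ^[o](λ_0) = [[λ_0 E − A_xx, −A_xv],[−C_x, −C_v],[−Φ A_zx, I − Φ A_zv]] has full column rank. -/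
theorem rank_eq_card_iff_ker {m n : Type*} [Fintype m] [Fintype n] [DecidableEq n]
    (M : Matrix m n ℂ) :
    M.rank = Fintype.card n ↔ ∀ v, M.mulVec v = 0 → v = 0 := by
  have h := M.mulVecLin.finrank_range_add_finrank_ker
  rw [Module.finrank_fintype_fun_eq_card] at h
  have h2 : (∀ v, M.mulVec v = 0 → v = 0) ↔ LinearMap.ker M.mulVecLin = ⊥ := by
    rw [LinearMap.ker_eq_bot']
    rfl
  rw [h2, ← Submodule.finrank_eq_zero (R := ℂ), Matrix.rank]
  omega

/-- **Theorem 2, pencil condition.** Under well-posedness (`I − Φ Azv` invertible), with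
`A = Axx + Axv (I − Φ Azv)⁻¹ Φ Azx` and `C = Cx + Cv (I − Φ Azv)⁻¹ Φ Azx`, the stacked
matrix `col{λ₀E − A, C}` has full column rank iff the matrix
`Ξ⁽ᵒ⁾(λ₀) = [[λ₀E − Axx, −Axv],[−Cx, −Cv],[−Φ Azx, I − Φ Azv]]` has full column rank. -/
theorem observability_pencil_iff_structured_pencil
    (Mx Mv Mz My : ℕ)
    (E Axx : Matrix (Fin Mx) (Fin Mx) ℂ)
    (Axv : Matrix (Fin Mx) (Fin Mv) ℂ)
    (Azx : Matrix (Fin Mz) (Fin Mx) ℂ)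
    (Azv : Matrix (Fin Mz) (Fin Mv) ℂ)
    (Cx : Matrix (Fin My) (Fin Mx) ℂ)
    (Cv : Matrix (Fin My) (Fin Mv) ℂ)
    (Φ : Matrix (Fin Mv) (Fin Mz) ℂ)
    (hwp : IsUnit ((1 : Matrix (Fin Mv) (Fin Mv) ℂ) - Φ * Azv))
    (A : Matrix (Fin Mx) (Fin Mx) ℂ)
    (hA : A = Axx + Axv * ((1 : Matrix (Fin Mv) (Fin Mv) ℂ) - Φ * Azv)⁻¹ * (Φ * Azx))
    (Cmat : Matrix (Fin My) (Fin Mx) ℂ)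
    (hC : Cmat = Cx + Cv * ((1 : Matrix (Fin Mv) (Fin Mv) ℂ) - Φ * Azv)⁻¹ * (Φ * Azx))
    (lam₀ : ℂ) :
    (Matrix.fromRows (lam₀ • E - A) Cmat).rank = Mx ↔
    (Matrix.fromRows
        (Matrix.fromBlocks (lam₀ • E - Axx) (-Axv) (-Cx) (-Cv))
        (Matrix.fromCols (-(Φ * Azx)) ((1 : Matrix (Fin Mv) (Fin Mv) ℂ) - Φ * Azv))).rank
      = Mx + Mv := by
  have r1 := rank_eq_card_iff_ker (Matrix.fromRows (lam₀ • E - A) Cmat)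
  have r2 := rank_eq_card_iff_ker (Matrix.fromRows
        (Matrix.fromBlocks (lam₀ • E - Axx) (-Axv) (-Cx) (-Cv))
        (Matrix.fromCols (-(Φ * Azx)) ((1 : Matrix (Fin Mv) (Fin Mv) ℂ) - Φ * Azv)))
  simp only [Fintype.card_sum, Fintype.card_fin] at r1 r2
  rw [r1, r2]
  clear r1 r2
  generalize (1 : Matrix (Fin Mv) (Fin Mv) ℂ) - Φ * Azv = N at *
  generalize Φ * Azx = B at *
  have hdet := (Matrix.isUnit_iff_isUnit_det N).1 hwp
  have hN1 : N * N⁻¹ = 1 := Matrix.mul_nonsing_inv N hdet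
  have hN2 : N⁻¹ * N = 1 := Matrix.nonsing_inv_mul N hdet
  have hz1 : ∀ x : Fin Mx → ℂ, (Matrix.fromRows (lam₀ • E - A) Cmat).mulVec x = 0 ↔
      (lam₀ • E - A).mulVec x = 0 ∧ Cmat.mulVec x = 0 := by
    intro x
    rw [Matrix.fromRows_mulVec, ← Sum.elim_zero_zero, Sum.elim_eq_iff]
  have hz2 : ∀ (x : Fin Mx → ℂ) (v : Fin Mv → ℂ), (Matrix.fromRows
        (Matrix.fromBlocks (lam₀ • E - Axx) (-Axv) (-Cx) (-Cv))
        (Matrix.fromCols (-B) N)).mulVec (Sum.elim x v) = 0 ↔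
      (lam₀ • E - A).mulVec x = 0 ∧ Cmat.mulVec x = 0 ∧ v = N⁻¹.mulVec (B.mulVec x) := by
    intro x v
    have hv : (-B).mulVec x + N.mulVec v = 0 ↔ v = N⁻¹.mulVec (B.mulVec x) := by
      rw [Matrix.neg_mulVec, neg_add_eq_zero]
      constructor
      · intro h
        rw [h, Matrix.mulVec_mulVec, hN2, Matrix.one_mulVec]
      · intro h
        rw [h, Matrix.mulVec_mulVec, hN1, Matrix.one_mulVec]
    rw [Matrix.fromRows_mulVec, ← Sum.elim_zero_zero, Sum.elim_eq_iff,
      Matrix.fromBlocks_mulVec, ← Sum.elim_zero_zero, Sum.elim_eq_iff,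
      Matrix.fromCols_mulVec]
    simp only [Sum.elim_comp_inl, Sum.elim_comp_inr]
    rw [hv, and_assoc]
    have key : v = N⁻¹.mulVec (B.mulVec x) →
        ((lam₀ • E - Axx).mulVec x + (-Axv).mulVec v = (lam₀ • E - A).mulVec x ∧
          (-Cx).mulVec x + (-Cv).mulVec v = -Cmat.mulVec x) := by
      rintro rfl
      subst hA hC
      constructor
      · simp only [Matrix.sub_mulVec, Matrix.add_mulVec, Matrix.neg_mulVec,
          Matrix.mulVec_mulVec, Matrix.mul_assoc, Matrix.neg_mul]
        abel
      · simp only [Matrix.add_mulVec, Matrix.neg_mulVec,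
          Matrix.mulVec_mulVec, Matrix.mul_assoc, Matrix.neg_mul]
        abel
    constructor
    · rintro ⟨h1, h2, h3⟩
      obtain ⟨k1, k2⟩ := key h3
      rw [k1] at h1
      rw [k2, neg_eq_zero] at h2
      exact ⟨h1, h2, h3⟩
    · rintro ⟨h1, h2, h3⟩
      obtain ⟨k1, k2⟩ := key h3
      rw [k1, k2, neg_eq_zero]
      exact ⟨h1, h2, h3⟩
  constructor
  · intro h w hw
    obtain ⟨x, v, rfl⟩ : ∃ x v, w = Sum.elim x v :=
      ⟨w ∘ Sum.inl, w ∘ Sum.inr, (Sum.elim_comp_inl_inr w).symm⟩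
    obtain ⟨h1, h2, h3⟩ := (hz2 x v).1 hw
    have hx := h x ((hz1 x).2 ⟨h1, h2⟩)
    subst hx
    rw [h3, Matrix.mulVec_zero, Matrix.mulVec_zero, Sum.elim_zero_zero]
  · intro h x hx
    obtain ⟨h1, h2⟩ := (hz1 x).1 hx
    have := h _ ((hz2 x _).2 ⟨h1, h2, rfl⟩)
    rw [← Sum.elim_zero_zero, Sum.elim_eq_iff] at this
    exact this.1
end

section
/- Let E, A_xx be M_x×M_x, A_xv be M_x×M_v, A_zx be M_z×M_x, A_zv be M_z×M_v, C_x be M_y×M_x, C_v be M_y×M_v, and Φ be M_v×M_z complex matrices, with I_{M_v} − Φ A_zv invertible. Define C = C_x + C_v (I − Φ A_zv)^{-1} Φ A_zx. Then the stacked matrix col{E, C} has full column rank if and only if the matrix Ξ_∞^[o] = [[E, 0],[−C_x, −C_v],[−Φ A_zx, I − Φ A_zv]] has full column rank. -/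
theorem rank_eq_card_iff_aux {m n : Type*} [Fintype m] [Fintype n] (A : Matrix m n ℂ) :
    A.rank = Fintype.card n ↔ ∀ v, A.mulVec v = 0 → v = 0 := by
  classical
  have h := LinearMap.finrank_range_add_finrank_ker A.mulVecLin
  rw [Module.finrank_fintype_fun_eq_card] at h
  have h2 : A.rank = Module.finrank ℂ (LinearMap.range A.mulVecLin) := rfl
  have h3 : (∀ v, A.mulVec v = 0 → v = 0) ↔ LinearMap.ker A.mulVecLin = ⊥ := by
    rw [LinearMap.ker_eq_bot']
    rfl
  rw [h3, ← Submodule.finrank_eq_zero (R := ℂ)]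
  omega

/-- **Theorem 2, condition at infinity.** Under well-posedness (`I − Φ Azv` invertible),
with `C = Cx + Cv (I − Φ Azv)⁻¹ Φ Azx`, the stacked matrix `col{E, C}` has full column
rank iff the matrix `Ξ∞⁽ᵒ⁾ = [[E, 0],[−Cx, −Cv],[−Φ Azx, I − Φ Azv]]` has full column
rank. -/
theorem observability_infinity_iff_structured_matrix
    (Mx Mv Mz My : ℕ)
    (E Axx : Matrix (Fin Mx) (Fin Mx) ℂ)
    (Axv : Matrix (Fin Mx) (Fin Mv) ℂ)
    (Azx : Matrix (Fin Mz) (Fin Mx) ℂ)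
    (Azv : Matrix (Fin Mz) (Fin Mv) ℂ)
    (Cx : Matrix (Fin My) (Fin Mx) ℂ)
    (Cv : Matrix (Fin My) (Fin Mv) ℂ)
    (Φ : Matrix (Fin Mv) (Fin Mz) ℂ)
    (hwp : IsUnit ((1 : Matrix (Fin Mv) (Fin Mv) ℂ) - Φ * Azv))
    (Cmat : Matrix (Fin My) (Fin Mx) ℂ)
    (hC : Cmat = Cx + Cv * ((1 : Matrix (Fin Mv) (Fin Mv) ℂ) - Φ * Azv)⁻¹ * (Φ * Azx)) :
    (Matrix.fromRows E Cmat).rank = Mx ↔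
    (Matrix.fromRows
        (Matrix.fromBlocks E 0 (-Cx) (-Cv))
        (Matrix.fromCols (-(Φ * Azx)) ((1 : Matrix (Fin Mv) (Fin Mv) ℂ) - Φ * Azv))).rank
      = Mx + Mv := by
  have hx := rank_eq_card_iff_aux (Matrix.fromRows E Cmat)
  have hy := rank_eq_card_iff_aux (Matrix.fromRows
        (Matrix.fromBlocks E 0 (-Cx) (-Cv))
        (Matrix.fromCols (-(Φ * Azx)) ((1 : Matrix (Fin Mv) (Fin Mv) ℂ) - Φ * Azv)))
  rw [Fintype.card_fin] at hx
  rw [Fintype.card_sum, Fintype.card_fin, Fintype.card_fin] at hy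
  rw [hx, hy]
  clear hx hy
  generalize (1 : Matrix (Fin Mv) (Fin Mv) ℂ) - Φ * Azv = W at *
  generalize Φ * Azx = B at *
  have hd : IsUnit W.det := (Matrix.isUnit_iff_isUnit_det W).1 hwp
  have h1 : ∀ x, (Matrix.fromRows E Cmat).mulVec x = 0 ↔
      E.mulVec x = 0 ∧ Cmat.mulVec x = 0 := by
    intro x
    rw [Matrix.fromRows_mulVec, ← Sum.elim_zero_zero, Sum.elim_eq_iff]
  have h2 : ∀ x v, (Matrix.fromRows (Matrix.fromBlocks E 0 (-Cx) (-Cv))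
      (Matrix.fromCols (-B) W)).mulVec (Sum.elim x v) = 0 ↔
      (E.mulVec x = 0 ∧ Cx.mulVec x + Cv.mulVec v = 0) ∧ W.mulVec v = B.mulVec x := by
    intro x v
    rw [Matrix.fromRows_mulVec, ← Sum.elim_zero_zero, Sum.elim_eq_iff,
      Matrix.fromBlocks_mulVec, ← Sum.elim_zero_zero, Sum.elim_eq_iff,
      Matrix.fromCols_mulVec]
    simp only [Sum.elim_comp_inl, Sum.elim_comp_inr, Matrix.zero_mulVec, add_zero,
      Matrix.neg_mulVec]
    rw [← neg_add, neg_eq_zero, neg_add_eq_zero, eq_comm (a := B.mulVec x)]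
  have h3 : ∀ x v, W.mulVec v = B.mulVec x ↔ v = (W⁻¹ * B).mulVec x := by
    intro x v
    rw [← Matrix.mulVec_mulVec]
    constructor
    · intro h
      rw [← h, Matrix.mulVec_mulVec, Matrix.nonsing_inv_mul _ hd, Matrix.one_mulVec]
    · intro h
      rw [h, Matrix.mulVec_mulVec, Matrix.mul_nonsing_inv _ hd, Matrix.one_mulVec]
  have h4 : ∀ x, Cmat.mulVec x = Cx.mulVec x + Cv.mulVec ((W⁻¹ * B).mulVec x) := by
    intro x
    rw [hC, Matrix.add_mulVec, Matrix.mulVec_mulVec, Matrix.mul_assoc]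
  constructor
  · intro h w hw
    obtain ⟨x, v, rfl⟩ : ∃ x v, w = Sum.elim x v :=
      ⟨w ∘ Sum.inl, w ∘ Sum.inr, (Sum.elim_comp_inl_inr w).symm⟩
    rw [h2, h3] at hw
    obtain ⟨⟨he, hc⟩, hv⟩ := hw
    have hx0 : x = 0 := h x ((h1 x).2 ⟨he, by rw [h4, ← hv, hc]⟩)
    rw [hx0, Matrix.mulVec_zero] at hv
    rw [hx0, hv, Sum.elim_zero_zero]
  · intro h x hx
    rw [h1, h4] at hx
    have := h (Sum.elim x ((W⁻¹ * B).mulVec x)) ((h2 _ _).2 ⟨hx, (h3 _ _).2 rfl⟩)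
    rw [← Sum.elim_zero_zero, Sum.elim_eq_iff] at this
    exact this.1
end

section
/- Let E, A_xx be M_x×M_x, A_xv be M_x×M_v, A_zx be M_z×M_x, A_zv be M_z×M_v, B_x be M_x×M_u, B_z be M_z×M_u, and Φ be M_v×M_z complex matrices, with I_{M_z} − A_zv Φ invertible. Define A = A_xx + A_xv Φ (I − A_zv Φ)^{-1} A_zx and B = B_x + A_xv Φ (I − A_zv Φ)^{-1} B_z. Then for every complex λ_0, the matrix [λ_0 E − A, B] has full row rank if and only if the matrix Ξ^[c](λ_0) = [[λ_0 E − A_xx, −B_x, −A_xv Φ],[−A_zx, −B_z, I_{M_z} − A_zv Φ]] has full row rank. -/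
theorem frr_iff_aux {m n : Type*} [Fintype m] [Fintype n]
    (M : Matrix m n ℂ) :
    M.rank = Fintype.card m ↔ ∀ w : m → ℂ, Matrix.vecMul w M = 0 → w = 0 := by
  have h1 : Function.Injective M.vecMul ↔ ∀ w : m → ℂ, Matrix.vecMul w M = 0 → w = 0 :=
    injective_iff_map_eq_zero M.vecMulLinear
  rw [← h1, Matrix.vecMul_injective_iff, linearIndependent_iff_card_eq_finrank_span,
    Matrix.rank_eq_finrank_span_row, eq_comm]
  rfl

/-- **Corollary 1, pencil condition.** Under well-posedness (`I − Azv Φ` invertible),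
with `A = Axx + Axv Φ (I − Azv Φ)⁻¹ Azx` and `B = Bx + Axv Φ (I − Azv Φ)⁻¹ Bz`, the
matrix `[λ₀E − A, B]` has full row rank iff the matrix
`Ξ⁽ᶜ⁾(λ₀) = [[λ₀E − Axx, −Bx, −Axv Φ],[−Azx, −Bz, I − Azv Φ]]` has full row rank. -/
theorem controllability_pencil_iff_structured_pencil
    (Mx Mv Mz Mu : ℕ)
    (E Axx : Matrix (Fin Mx) (Fin Mx) ℂ)
    (Axv : Matrix (Fin Mx) (Fin Mv) ℂ)
    (Azx : Matrix (Fin Mz) (Fin Mx) ℂ)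
    (Azv : Matrix (Fin Mz) (Fin Mv) ℂ)
    (Bx : Matrix (Fin Mx) (Fin Mu) ℂ)
    (Bz : Matrix (Fin Mz) (Fin Mu) ℂ)
    (Φ : Matrix (Fin Mv) (Fin Mz) ℂ)
    (hwp : IsUnit ((1 : Matrix (Fin Mz) (Fin Mz) ℂ) - Azv * Φ))
    (A : Matrix (Fin Mx) (Fin Mx) ℂ)
    (hA : A = Axx + Axv * Φ * ((1 : Matrix (Fin Mz) (Fin Mz) ℂ) - Azv * Φ)⁻¹ * Azx)
    (B : Matrix (Fin Mx) (Fin Mu) ℂ)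
    (hB : B = Bx + Axv * Φ * ((1 : Matrix (Fin Mz) (Fin Mz) ℂ) - Azv * Φ)⁻¹ * Bz)
    (lam₀ : ℂ) :
    (Matrix.fromCols (lam₀ • E - A) B).rank = Mx ↔
    (Matrix.fromBlocks
        (lam₀ • E - Axx) (Matrix.fromCols (-Bx) (-(Axv * Φ)))
        (-Azx) (Matrix.fromCols (-Bz) ((1 : Matrix (Fin Mz) (Fin Mz) ℂ) - Azv * Φ))).rank
      = Mx + Mz := by
  have e1 := frr_iff_aux (Matrix.fromCols (lam₀ • E - A) B)
  have e2 := frr_iff_aux (Matrix.fromBlocks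
        (lam₀ • E - Axx) (Matrix.fromCols (-Bx) (-(Axv * Φ)))
        (-Azx) (Matrix.fromCols (-Bz) ((1 : Matrix (Fin Mz) (Fin Mz) ℂ) - Azv * Φ)))
  simp only [Fintype.card_fin, Fintype.card_sum] at e1 e2
  rw [e1, e2]
  clear e1 e2
  have hdet := (Matrix.isUnit_iff_isUnit_det _).1 hwp
  generalize hD : (1 : Matrix (Fin Mz) (Fin Mz) ℂ) - Azv * Φ = D at *
  generalize hG : Axv * Φ = G at *
  have hz : ∀ (a b : ℕ) (f : Fin a → ℂ) (g : Fin b → ℂ),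
      Sum.elim f g = 0 ↔ f = 0 ∧ g = 0 := by
    intro a b f g
    rw [← Sum.elim_zero_zero, Sum.elim_eq_iff]
  have hz' : ∀ (a b c : ℕ) (f : Fin a → ℂ) (g : Fin b → ℂ) (h : Fin c → ℂ),
      Sum.elim f (Sum.elim g h) = 0 ↔ f = 0 ∧ g = 0 ∧ h = 0 := by
    intro a b c f g h
    rw [← hz, ← Sum.elim_zero_zero, Sum.elim_eq_iff]
  -- both left kernels, in coordinates
  have k1 : ∀ x : Fin Mx → ℂ, Matrix.vecMul x (Matrix.fromCols (lam₀ • E - A) B) = 0 ↔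
      Matrix.vecMul x (lam₀ • E - A) = 0 ∧ Matrix.vecMul x B = 0 := by
    intro x
    rw [Matrix.vecMul_fromCols, hz]
  have k2 : ∀ (x : Fin Mx → ℂ) (y : Fin Mz → ℂ),
      Matrix.vecMul (Sum.elim x y) (Matrix.fromBlocks
        (lam₀ • E - Axx) (Matrix.fromCols (-Bx) (-G)) (-Azx) (Matrix.fromCols (-Bz) D)) = 0 ↔
      Matrix.vecMul x (lam₀ • E - A) = 0 ∧ Matrix.vecMul x B = 0 ∧
        y = Matrix.vecMul x (G * D⁻¹) := by
    intro x y
    have hy : Matrix.vecMul x (-G) + Matrix.vecMul y D = 0 ↔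
        y = Matrix.vecMul x (G * D⁻¹) := by
      rw [Matrix.vecMul_neg, neg_add_eq_zero]
      constructor
      · intro h
        rw [← Matrix.vecMul_vecMul, h, Matrix.vecMul_vecMul, Matrix.mul_nonsing_inv _ hdet,
          Matrix.vecMul_one]
      · rintro rfl
        rw [Matrix.vecMul_vecMul, Matrix.mul_assoc, Matrix.nonsing_inv_mul _ hdet,
          Matrix.mul_one]
    have hs : Matrix.vecMul (Sum.elim x y) (Matrix.fromBlocks
        (lam₀ • E - Axx) (Matrix.fromCols (-Bx) (-G)) (-Azx) (Matrix.fromCols (-Bz) D)) =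
        Sum.elim (Matrix.vecMul x (lam₀ • E - Axx) + Matrix.vecMul y (-Azx))
          (Sum.elim (Matrix.vecMul x (-Bx) + Matrix.vecMul y (-Bz))
            (Matrix.vecMul x (-G) + Matrix.vecMul y D)) := by
      rw [Matrix.vecMul_fromBlocks]
      simp only [Matrix.vecMul_fromCols, Sum.elim_comp_inl, Sum.elim_comp_inr]
      congr 1
      ext (i | i) <;> rfl
    rw [hs, hz', hy, ← and_assoc, ← and_assoc]
    refine and_congr_left ?_
    rintro rfl
    have a1 : Matrix.vecMul x (lam₀ • E - Axx) + Matrix.vecMul (Matrix.vecMul x (G * D⁻¹)) (-Azx)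
        = Matrix.vecMul x (lam₀ • E - A) := by
      rw [Matrix.vecMul_vecMul, ← Matrix.vecMul_add, hA, Matrix.mul_neg]
      congr 1
      abel
    have a2 : Matrix.vecMul x (-Bx) + Matrix.vecMul (Matrix.vecMul x (G * D⁻¹)) (-Bz)
        = -Matrix.vecMul x B := by
      rw [Matrix.vecMul_vecMul, ← Matrix.vecMul_add, hB, Matrix.mul_neg, ← Matrix.vecMul_neg]
      congr 1
      abel
    rw [a1, a2, neg_eq_zero]
  constructor
  · intro h w hw
    obtain ⟨x, y, rfl⟩ : ∃ x y, w = Sum.elim x y :=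
      ⟨w ∘ Sum.inl, w ∘ Sum.inr, (Sum.elim_comp_inl_inr w).symm⟩
    obtain ⟨p, q, r⟩ := (k2 x y).1 hw
    have hx := h x ((k1 x).2 ⟨p, q⟩)
    rw [hx, Matrix.zero_vecMul] at r
    exact (hz _ _ _ _).2 ⟨hx, r⟩
  · intro h x hx
    obtain ⟨p, q⟩ := (k1 x).1 hx
    exact ((hz _ _ _ _).1 (h _ ((k2 x _).2 ⟨p, q, rfl⟩))).1
end

section
/- Assume the generalized-LFT setting: with W_1 = (M − P_1 H)^{-1} P_1 G and W_2 = (N − P_2 S)^{-1} P_2 K, define E = E_0 + F_1 W_1, A_xx = A_xx^0 + F_2 W_1, C_x = C_x^0 + F_3 W_1, A_zx = A_zx^0 + F_4 W_1, A_xv = A_xv^0 + J_1 W_2, C_v = C_v^0 + J_2 W_2, A_zv = A_zv^0 + J_3 W_2. Then for every complex λ, the matrix Ξ^[o](λ) = [[λE − A_xx, −A_xv],[−C_x, −C_v],[−Φ A_zx, I_{M_v} − Φ A_zv]] has full column rank if and only if the matrix Ξ_p^[o](λ) = [[λE_0 − A_xx^0, λF_1 − F_2, −A_xv^0, −J_1],[−C_x^0,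 −F_3, −C_v^0, −J_2],[−P_1 G, M − P_1 H, 0, 0],[0, 0, −P_2 K, N − P_2 S],[−Φ A_zx^0, −Φ F_4, I_{M_v} − Φ A_zv^0, −Φ J_3]] has full column rank. -/
theorem fcr_iff {m n : Type*} [Fintype m] [Fintype n] [DecidableEq n] (A : Matrix m n ℂ) (k : ℕ)
    (hk : Fintype.card n = k) :
    A.rank = k ↔ ∀ v, A.mulVec v = 0 → v = 0 := by
  subst hk
  have h := A.mulVecLin.finrank_range_add_finrank_ker
  rw [Module.finrank_fintype_fun_eq_card] at h
  have h2 : (∀ v, A.mulVec v = 0 → v = 0) ↔ LinearMap.ker A.mulVecLin = ⊥ := by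
    rw [LinearMap.ker_eq_bot']; rfl
  rw [h2, ← Submodule.finrank_eq_zero (R := ℂ)]
  unfold Matrix.rank
  omega

theorem sum_elim_zero_iff {a b : Type*} (x : a → ℂ) (y : b → ℂ) :
    Sum.elim x y = 0 ↔ x = 0 ∧ y = 0 := by
  constructor
  · intro h
    exact ⟨funext fun i => congrFun h (Sum.inl i), funext fun i => congrFun h (Sum.inr i)⟩
  · rintro ⟨rfl, rfl⟩
    exact Sum.elim_zero_zero

theorem forall_sum_fun {a b : Type*} (p : (a ⊕ b → ℂ) → Prop) :
    (∀ v, p v) ↔ ∀ x y, p (Sum.elim x y) := by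
  constructor
  · intro h x y; exact h _
  · intro h v
    have := h (v ∘ Sum.inl) (v ∘ Sum.inr)
    rwa [Sum.elim_comp_inl_inr] at this

theorem solve_iff {q n : ℕ} (T : Matrix (Fin q) (Fin q) ℂ) (hT : IsUnit T)
    (B : Matrix (Fin q) (Fin n) ℂ) (x : Fin n → ℂ) (w : Fin q → ℂ) :
    -(B.mulVec x) + T.mulVec w = 0 ↔ w = (T⁻¹ * B).mulVec x := by
  have hd := (Matrix.isUnit_iff_isUnit_det T).1 hT
  rw [neg_add_eq_zero]
  constructor
  · intro h
    rw [← Matrix.mulVec_mulVec, h, Matrix.mulVec_mulVec, Matrix.nonsing_inv_mul _ hd,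
      Matrix.one_mulVec]
  · rintro rfl
    rw [Matrix.mulVec_mulVec, ← Matrix.mul_assoc, Matrix.mul_nonsing_inv _ hd, Matrix.one_mul]


/-- **Theorem 3 (generalized LFT).** With `W₁ = (M − P₁H)⁻¹ P₁G`, `W₂ = (N − P₂S)⁻¹ P₂K`
and system matrices given by the generalized LFTs `E = E₀ + F₁W₁`, `Axx = Axx₀ + F₂W₁`,
`Cx = Cx₀ + F₃W₁`, `Azx = Azx₀ + F₄W₁`, `Axv = Axv₀ + J₁W₂`, `Cv = Cv₀ + J₂W₂`,
`Azv = Azv₀ + J₃W₂`, for every complex `λ` the matrix `Ξ⁽ᵒ⁾(λ)` has full column rank iff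
the parameter-affine matrix `Ξₚ⁽ᵒ⁾(λ)` has full column rank. -/
theorem lft_observability_pencil_iff
    (Mx Mv Mz My q₁ q₂ r₁ r₂ : ℕ)
    (E₀ Axx₀ : Matrix (Fin Mx) (Fin Mx) ℂ)
    (Axv₀ : Matrix (Fin Mx) (Fin Mv) ℂ)
    (Azx₀ : Matrix (Fin Mz) (Fin Mx) ℂ)
    (Azv₀ : Matrix (Fin Mz) (Fin Mv) ℂ)
    (Cx₀ : Matrix (Fin My) (Fin Mx) ℂ)
    (Cv₀ : Matrix (Fin My) (Fin Mv) ℂ)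
    (Φ : Matrix (Fin Mv) (Fin Mz) ℂ)
    (F₁ F₂ : Matrix (Fin Mx) (Fin q₁) ℂ)
    (F₃ : Matrix (Fin My) (Fin q₁) ℂ)
    (F₄ : Matrix (Fin Mz) (Fin q₁) ℂ)
    (J₁ : Matrix (Fin Mx) (Fin q₂) ℂ)
    (J₂ : Matrix (Fin My) (Fin q₂) ℂ)
    (J₃ : Matrix (Fin Mz) (Fin q₂) ℂ)
    (P₁ : Matrix (Fin q₁) (Fin r₁) ℂ)
    (G : Matrix (Fin r₁) (Fin Mx) ℂ)
    (H : Matrix (Fin r₁) (Fin q₁) ℂ)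
    (M : Matrix (Fin q₁) (Fin q₁) ℂ)
    (P₂ : Matrix (Fin q₂) (Fin r₂) ℂ)
    (K : Matrix (Fin r₂) (Fin Mv) ℂ)
    (S : Matrix (Fin r₂) (Fin q₂) ℂ)
    (N : Matrix (Fin q₂) (Fin q₂) ℂ)
    (hwp₁ : IsUnit (M - P₁ * H)) (hwp₂ : IsUnit (N - P₂ * S))
    (W₁ : Matrix (Fin q₁) (Fin Mx) ℂ) (hW₁ : W₁ = (M - P₁ * H)⁻¹ * (P₁ * G))
    (W₂ : Matrix (Fin q₂) (Fin Mv) ℂ) (hW₂ : W₂ = (N - P₂ * S)⁻¹ * (P₂ * K))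
    (E Axx : Matrix (Fin Mx) (Fin Mx) ℂ)
    (hE : E = E₀ + F₁ * W₁) (hAxx : Axx = Axx₀ + F₂ * W₁)
    (Cx : Matrix (Fin My) (Fin Mx) ℂ) (hCx : Cx = Cx₀ + F₃ * W₁)
    (Azx : Matrix (Fin Mz) (Fin Mx) ℂ) (hAzx : Azx = Azx₀ + F₄ * W₁)
    (Axv : Matrix (Fin Mx) (Fin Mv) ℂ) (hAxv : Axv = Axv₀ + J₁ * W₂)
    (Cv : Matrix (Fin My) (Fin Mv) ℂ) (hCv : Cv = Cv₀ + J₂ * W₂)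
    (Azv : Matrix (Fin Mz) (Fin Mv) ℂ) (hAzv : Azv = Azv₀ + J₃ * W₂)
    (lam : ℂ) :
    (Matrix.fromRows
        (Matrix.fromBlocks (lam • E - Axx) (-Axv) (-Cx) (-Cv))
        (Matrix.fromCols (-(Φ * Azx)) ((1 : Matrix (Fin Mv) (Fin Mv) ℂ) - Φ * Azv))).rank
      = Mx + Mv ↔
    (Matrix.fromRows
      (Matrix.fromCols
        (Matrix.fromCols (lam • E₀ - Axx₀) (lam • F₁ - F₂))
        (Matrix.fromCols (-Axv₀) (-J₁)))
      (Matrix.fromRows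
        (Matrix.fromCols
          (Matrix.fromCols (-Cx₀) (-F₃))
          (Matrix.fromCols (-Cv₀) (-J₂)))
        (Matrix.fromRows
          (Matrix.fromCols
            (Matrix.fromCols (-(P₁ * G)) (M - P₁ * H))
            (Matrix.fromCols 0 0))
          (Matrix.fromRows
            (Matrix.fromCols
              (Matrix.fromCols 0 0)
              (Matrix.fromCols (-(P₂ * K)) (N - P₂ * S)))
            (Matrix.fromCols
              (Matrix.fromCols (-(Φ * Azx₀)) (-(Φ * F₄)))
              (Matrix.fromCols ((1 : Matrix (Fin Mv) (Fin Mv) ℂ) - Φ * Azv₀)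
                (-(Φ * J₃)))))))).rank
      = Mx + q₁ + Mv + q₂ := by
  rw [fcr_iff _ _ (by simp), fcr_iff _ _ (by simp; ring)]
  simp only [forall_sum_fun, ← Matrix.fromRows_fromCols_eq_fromBlocks, Matrix.fromRows_mulVec,
    Matrix.fromCols_mulVec_sumElim, sum_elim_zero_iff, Matrix.zero_mulVec, add_zero, zero_add]
  have k₁ := fun x w => solve_iff (M - P₁ * H) hwp₁ (P₁ * G) x w
  have k₂ := fun x w => solve_iff (N - P₂ * S) hwp₂ (P₂ * K) x w
  rw [← hW₁] at k₁
  rw [← hW₂] at k₂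
  have e₁ : ∀ x v, (lam • E - Axx).mulVec x + (-Axv).mulVec v =
      (lam • E₀ - Axx₀).mulVec x + (lam • F₁ - F₂).mulVec (W₁.mulVec x) +
        ((-Axv₀).mulVec v + (-J₁).mulVec (W₂.mulVec v)) := by
    intro x v
    subst hE hAxx hAxv
    simp only [Matrix.mulVec_mulVec, ← Matrix.add_mulVec]
    congr 2 <;> simp only [Matrix.sub_mul, Matrix.neg_mul, Matrix.smul_mul, smul_add] <;> abel
  have e₂ : ∀ x v, (-Cx).mulVec x + (-Cv).mulVec v =
      (-Cx₀).mulVec x + (-F₃).mulVec (W₁.mulVec x) +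
        ((-Cv₀).mulVec v + (-J₂).mulVec (W₂.mulVec v)) := by
    intro x v
    subst hCx hCv
    simp only [Matrix.mulVec_mulVec, ← Matrix.add_mulVec]
    congr 2 <;> simp only [Matrix.neg_mul] <;> abel
  have e₃ : ∀ x v, (-(Φ * Azx)).mulVec x + (1 - Φ * Azv).mulVec v =
      (-(Φ * Azx₀)).mulVec x + (-(Φ * F₄)).mulVec (W₁.mulVec x) +
        ((1 - Φ * Azv₀).mulVec v + (-(Φ * J₃)).mulVec (W₂.mulVec v)) := by
    intro x v
    subst hAzx hAzv
    simp only [Matrix.mulVec_mulVec, ← Matrix.add_mulVec]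
    congr 2 <;> simp only [Matrix.neg_mul, Matrix.mul_add, Matrix.mul_assoc] <;> abel
  constructor
  · rintro h x w v u ⟨h1, h2, h3, h4, h5⟩
    rw [Matrix.neg_mulVec, k₁] at h3
    rw [Matrix.neg_mulVec, k₂] at h4
    subst h3 h4
    obtain ⟨rfl, rfl⟩ := h x v ⟨⟨(e₁ x v).trans h1, (e₂ x v).trans h2⟩, (e₃ x v).trans h5⟩
    simp
  · rintro h x v ⟨⟨h1, h2⟩, h3⟩
    obtain ⟨⟨hx, -⟩, hv, -⟩ := h x (W₁.mulVec x) v (W₂.mulVec v)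
      ⟨(e₁ x v).symm.trans h1, (e₂ x v).symm.trans h2,
        by rw [Matrix.neg_mulVec, k₁], by rw [Matrix.neg_mulVec, k₂], (e₃ x v).symm.trans h3⟩
    exact ⟨hx, hv⟩
end

section
/- Let E, A_xx be M_x×M_x, A_xv be M_x×M_v, A_zx be M_z×M_x, A_zv be M_z×M_v, C_x be M_y×M_x, C_v be M_y×M_v, and Φ be M_v×M_z complex matrices. Let N_x (M_x columns-block) and N_v (M_v columns-block) be matrices such that col{N_x, N_v} has full column rank and its columns span the null space of [C_x, C_v]. Then for every complex λ_0, the matrix Ξ^[o](λ_0) = [[λ_0 E − A_xx, −A_xv],[−C_x, −C_v],[−Φ A_zx, I_{M_v} − Φ A_zv]] has full column rank if and only if the matrix col{λ_0 E N_x − (A_xx N_x + A_xv N_v), N_v − Φ (A_zx N_x + A_zv N_v)} has full column rank. -/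
theorem elim_eq_zero_aux {m n : Type*} (x : m → ℂ) (y : n → ℂ) :
    Sum.elim x y = 0 ↔ x = 0 ∧ y = 0 := by
  constructor
  · intro h
    exact ⟨funext fun i => congrFun h (Sum.inl i), funext fun i => congrFun h (Sum.inr i)⟩
  · rintro ⟨rfl, rfl⟩
    ext i
    cases i <;> rfl

/-- **Reduction of the observability pencil via a kernel basis of `[Cx, Cv]`.**
If `col{Nx, Nv}` has full column rank and its columns span the null space of `[Cx, Cv]`,
then for every complex `λ₀` the matrix `Ξ⁽ᵒ⁾(λ₀)` has full column rank iff
`col{λ₀ E Nx − (Axx Nx + Axv Nv), Nv − Φ (Azx Nx + Azv Nv)}` has full column rank. -/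
theorem observability_pencil_iff_reduced
    (Mx Mv Mz My k : ℕ)
    (E Axx : Matrix (Fin Mx) (Fin Mx) ℂ)
    (Axv : Matrix (Fin Mx) (Fin Mv) ℂ)
    (Azx : Matrix (Fin Mz) (Fin Mx) ℂ)
    (Azv : Matrix (Fin Mz) (Fin Mv) ℂ)
    (Cx : Matrix (Fin My) (Fin Mx) ℂ)
    (Cv : Matrix (Fin My) (Fin Mv) ℂ)
    (Φ : Matrix (Fin Mv) (Fin Mz) ℂ)
    (Nx : Matrix (Fin Mx) (Fin k) ℂ)
    (Nv : Matrix (Fin Mv) (Fin k) ℂ)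
    (hfcr : (Matrix.fromRows Nx Nv).rank = k)
    (hspan : LinearMap.range (Matrix.fromRows Nx Nv).mulVecLin
      = LinearMap.ker (Matrix.fromCols Cx Cv).mulVecLin)
    (lam₀ : ℂ) :
    (Matrix.fromRows
        (Matrix.fromBlocks (lam₀ • E - Axx) (-Axv) (-Cx) (-Cv))
        (Matrix.fromCols (-(Φ * Azx)) ((1 : Matrix (Fin Mv) (Fin Mv) ℂ) - Φ * Azv))).rank
      = Mx + Mv ↔
    (Matrix.fromRows
        (lam₀ • (E * Nx) - (Axx * Nx + Axv * Nv))
        (Nv - Φ * (Azx * Nx + Azv * Nv))).rank = k := by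
  have e1 := rank_eq_card_iff_aux (Matrix.fromRows
        (Matrix.fromBlocks (lam₀ • E - Axx) (-Axv) (-Cx) (-Cv))
        (Matrix.fromCols (-(Φ * Azx)) ((1 : Matrix (Fin Mv) (Fin Mv) ℂ) - Φ * Azv)))
  have e2 := rank_eq_card_iff_aux (Matrix.fromRows
        (lam₀ • (E * Nx) - (Axx * Nx + Axv * Nv))
        (Nv - Φ * (Azx * Nx + Azv * Nv)))
  have e3 := rank_eq_card_iff_aux (Matrix.fromRows Nx Nv)
  simp only [Fintype.card_sum, Fintype.card_fin] at e1 e2 e3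
  rw [e1, e2]
  have hinj := e3.1 hfcr
  -- the kernel of the pencil, in coordinates
  have k1 : ∀ (x : Fin Mx → ℂ) (y : Fin Mv → ℂ), (Matrix.fromRows
        (Matrix.fromBlocks (lam₀ • E - Axx) (-Axv) (-Cx) (-Cv))
        (Matrix.fromCols (-(Φ * Azx)) ((1 : Matrix (Fin Mv) (Fin Mv) ℂ) - Φ * Azv))).mulVec
          (Sum.elim x y) = 0 ↔
      ((lam₀ • E.mulVec x - (Axx.mulVec x + Axv.mulVec y) = 0 ∧
        Cx.mulVec x + Cv.mulVec y = 0) ∧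
        y - Φ.mulVec (Azx.mulVec x + Azv.mulVec y) = 0) := by
    intro x y
    rw [Matrix.fromRows_mulVec, elim_eq_zero_aux, Matrix.fromBlocks_mulVec, elim_eq_zero_aux,
      Matrix.fromCols_mulVec]
    simp only [Sum.elim_comp_inl, Sum.elim_comp_inr, Matrix.sub_mulVec, Matrix.neg_mulVec,
      Matrix.smul_mulVec, Matrix.one_mulVec, ← Matrix.mulVec_mulVec, Matrix.mulVec_add]
    refine and_congr (and_congr ?_ ?_) ?_
    · rw [sub_add_eq_sub_sub, sub_eq_add_neg _ (Axv.mulVec y)]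
    · rw [← neg_add, neg_eq_zero]
    · rw [sub_add_eq_sub_sub, sub_eq_add_neg, add_comm, sub_right_comm, sub_eq_add_neg]
      simp only [sub_eq_add_neg, add_assoc, add_comm, add_left_comm]
  have k2 : ∀ w : Fin k → ℂ, (Matrix.fromRows
        (lam₀ • (E * Nx) - (Axx * Nx + Axv * Nv))
        (Nv - Φ * (Azx * Nx + Azv * Nv))).mulVec w = 0 ↔
      (lam₀ • E.mulVec (Nx.mulVec w) - (Axx.mulVec (Nx.mulVec w) + Axv.mulVec (Nv.mulVec w)) = 0 ∧
        Nv.mulVec w - Φ.mulVec (Azx.mulVec (Nx.mulVec w) + Azv.mulVec (Nv.mulVec w)) = 0) := by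
    intro w
    rw [Matrix.fromRows_mulVec, elim_eq_zero_aux]
    simp only [Matrix.sub_mulVec, Matrix.add_mulVec, Matrix.smul_mulVec, ← Matrix.mulVec_mulVec]
  have hC : ∀ (x : Fin Mx → ℂ) (y : Fin Mv → ℂ), Cx.mulVec x + Cv.mulVec y = 0 ↔
      ∃ w, Nx.mulVec w = x ∧ Nv.mulVec w = y := by
    intro x y
    have h := SetLike.ext_iff.1 hspan (Sum.elim x y)
    rw [LinearMap.mem_range, LinearMap.mem_ker] at h
    simp only [Matrix.mulVecLin_apply, Matrix.fromCols_mulVec, Matrix.fromRows_mulVec,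
      Sum.elim_comp_inl, Sum.elim_comp_inr] at h
    rw [← h]
    refine exists_congr fun w => ?_
    exact Sum.elim_eq_iff
  constructor
  · intro h w hw
    obtain ⟨h1, h2⟩ := (k2 w).1 hw
    apply hinj
    rw [Matrix.fromRows_mulVec]
    exact h _ ((k1 _ _).2 ⟨⟨h1, (hC _ _).2 ⟨w, rfl, rfl⟩⟩, h2⟩)
  · intro h v hv
    obtain ⟨x, y, rfl⟩ : ∃ x y, v = Sum.elim x y :=
      ⟨_, _, (Sum.elim_comp_inl_inr v).symm⟩
    obtain ⟨⟨h1, h2⟩, h3⟩ := (k1 _ _).1 hv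
    obtain ⟨w, rfl, rfl⟩ := (hC _ _).1 h2
    have hw := h w ((k2 w).2 ⟨h1, h3⟩)
    subst hw
    simp [elim_eq_zero_aux]
end
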